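/- arXiv:1807.05869 — 2 statements merged into one kernel-verified Lean document; each statement's English description precedes it below -/
import Mathlib

section
/- Let A and B be graded Artinian algebras over a field k with symmetric Hilbert functions and socle degrees j_A = a and j_B = b, let C = A ⊗_k B, and assume char k = 0 or char k > a + b. If ℓ_C = ℓ_A ⊗ 1 + 1 ⊗ ℓ_B ∈ C_1 is a strong Lefschetz element for C, then ℓ_A ∈ A_1 is a strong Lefschetz element for A and ℓ_B ∈ B_1 is a strong Lefschetz element for B. -/
/-!
Write `a = jA`, `b = jB`, and `c = a + b`. The Hilbert function of `C = A ⊗ B` is symmetric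
about `c / 2` (`finrank_tensorGrading_le`), so the strong Lefschetz property of `ℓ_C` makes
`ℓ_C ^ (c - 2i)` injective on `C_i` whenever `2i ≤ c`.

If `x ∈ A_i`, `2i ≤ a`, is killed by `ℓ_A ^ (a - 2i)`, then `x ⊗ 1 ∈ C_i` is killed by
`ℓ_C ^ (c - 2i)`: in the binomial expansion each term `ℓ_A ^ p x ⊗ ℓ_B ^ q`, `p + q = c - 2i`,
has either `p ≥ a - 2i` or `q > b`, and `ℓ_B ^ (b + 1) = 0` for degree reasons. Hence `x = 0`.
So `ℓ_A ^ (a - 2i)` is injective on `A_i` for `2i ≤ a`, which together with the symmetry of the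
Hilbert function gives all the maximal ranks (`isSL_of_injective`). The argument for `B` is the
same.
-/

/-- A linear form `ℓ` is strong Lefschetz for the graded algebra `A` with
grading `𝒜` if `ℓ ∈ 𝒜 1` and all multiplication maps `×ℓ^j : 𝒜 i → 𝒜 (i+j)`
have maximal rank. -/
def IsSL {k A : Type*} [Field k] [CommRing A] [Algebra k A]
    (𝒜 : ℕ → Submodule k A) (ℓ : A) : Prop :=
  ℓ ∈ 𝒜 1 ∧ ∀ i j : ℕ,
    Module.finrank k ((𝒜 i).map (LinearMap.mulLeft k (ℓ ^ j))) =
      min (Module.finrank k (𝒜 i)) (Module.finrank k (𝒜 (i + j)))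

open TensorProduct

/-- The grading on the tensor product `C = A ⊗_k B` of two graded algebras:
`C_d = ⊕_{i+j=d} A_i ⊗ B_j`. -/
noncomputable def tensorGrading {k A B : Type*} [Field k]
    [CommRing A] [Algebra k A] [CommRing B] [Algebra k B]
    (𝒜 : ℕ → Submodule k A) (ℬ : ℕ → Submodule k B) (d : ℕ) :
    Submodule k (A ⊗[k] B) :=
  ⨆ (p : ℕ × ℕ) (_ : p.1 + p.2 = d),
    Submodule.map₂ (TensorProduct.mk k A B) (𝒜 p.1) (ℬ p.2)

/-- The binomial expansion of `(u + v) ^ (p + b)` has only terms divisible by `u ^ p` or by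
`v ^ (b + 1)`. -/
lemma add_pow_mul_eq_zero {R : Type*} [CommRing R] {u v z : R} {p b : ℕ}
    (hu : u ^ p * z = 0) (hv : v ^ (b + 1) = 0) : (u + v) ^ (p + b) * z = 0 := by
  rw [add_pow, Finset.sum_mul]
  refine Finset.sum_eq_zero fun m _ => ?_
  by_cases h : p ≤ m
  · obtain ⟨t, rfl⟩ := Nat.exists_eq_add_of_le h
    rw [pow_add]
    linear_combination (u ^ t * v ^ (p + b - (p + t)) * ((p + b).choose (p + t) : R)) * hu
  · have : v ^ (p + b - m) = 0 := pow_eq_zero_of_le (by omega) hv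
    simp [this]

section Graded

variable {k A : Type*} [Field k] [CommRing A] [Algebra k A]
  (𝒜 : ℕ → Submodule k A) [GradedAlgebra 𝒜]

lemma pow_mul_mem_graded {ℓ : A} (hℓ : ℓ ∈ 𝒜 1) {i : ℕ} (j : ℕ) {x : A} (hx : x ∈ 𝒜 i) :
    ℓ ^ j * x ∈ 𝒜 (i + j) := by
  have h := SetLike.GradedMul.mul_mem (SetLike.pow_mem_graded j hℓ) hx
  simpa [add_comm] using h

lemma pow_eq_zero_of_socle {ℓ : A} (hℓ : ℓ ∈ 𝒜 1) {a : ℕ} (ha : ∀ i, a < i → 𝒜 i = ⊥) :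
    ℓ ^ (a + 1) = 0 := by
  have h := SetLike.pow_mem_graded (A := 𝒜) (a + 1) hℓ
  simpa [ha (a + 1) (by omega)] using h

/-- With a symmetric Hilbert function, the maximal rank property of all powers of `ℓ` follows
from the injectivity of the maps `×ℓ ^ (a - 2i) : 𝒜 i → 𝒜 (a - i)` between complementary
degrees. -/
lemma isSL_of_injective [FiniteDimensional k A] {a : ℕ} (ha : ∀ i, a < i → 𝒜 i = ⊥)
    (hsymm : ∀ i, i ≤ a → Module.finrank k (𝒜 i) = Module.finrank k (𝒜 (a - i)))
    {ℓ : A} (hℓ : ℓ ∈ 𝒜 1)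
    (hinj : ∀ i, 2 * i ≤ a → ∀ x ∈ 𝒜 i, ℓ ^ (a - 2 * i) * x = 0 → x = 0) :
    IsSL 𝒜 ℓ := by
  refine ⟨hℓ, fun i j => ?_⟩
  have hle : ∀ i j, (𝒜 i).map (LinearMap.mulLeft k (ℓ ^ j)) ≤ 𝒜 (i + j) := by
    rintro i j _ ⟨x, hx, rfl⟩
    exact pow_mul_mem_graded 𝒜 hℓ j hx
  have hrank : ∀ i j, (∀ x ∈ 𝒜 i, ℓ ^ j * x = 0 → x = 0) →
      Module.finrank k ((𝒜 i).map (LinearMap.mulLeft k (ℓ ^ j))) = Module.finrank k (𝒜 i) := by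
    intro i j h
    have hinj' : Function.Injective ((LinearMap.mulLeft k (ℓ ^ j)).domRestrict (𝒜 i)) := by
      rw [← LinearMap.ker_eq_bot, LinearMap.ker_eq_bot']
      rintro ⟨x, hx⟩ hx'
      exact Subtype.ext (h x hx (by simpa using hx'))
    have := LinearMap.finrank_range_of_inj hinj'
    rwa [LinearMap.range_domRestrict] at this
  rcases lt_or_ge a (i + j) with h1 | h1
  · have h0 := hle i j
    rw [ha _ h1, le_bot_iff] at h0
    rw [h0, ha _ h1]
    simp
  rcases le_total (2 * i + j) a with h2 | h2
  · -- The map is injective, being a factor of the injective `×ℓ ^ (a - 2i)`.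
    have h := hrank i j fun x hx h0 => hinj i (by omega) x hx (by
      rw [show a - 2 * i = (a - 2 * i - j) + j by omega, pow_add, mul_assoc, h0, mul_zero])
    have h' := Submodule.finrank_mono (hle i j)
    rw [h] at h' ⊢
    exact (min_eq_left h').symm
  · -- The map is surjective: the bijection from the degree `m` complementary to `i + j`
    -- factors through it.
    obtain ⟨m, hm⟩ := Nat.exists_eq_add_of_le h1
    have h := hrank m (a - 2 * m) (hinj m (by omega))
    have e : m + (a - 2 * m) = i + j := by omega
    have hle' := hle m (a - 2 * m)
    rw [e] at hle'
    have hs := hsymm m (by omega)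
    rw [show a - m = i + j by omega] at hs
    have heq := Submodule.eq_of_le_of_finrank_eq hle' (h.trans hs)
    have hsurj : (𝒜 i).map (LinearMap.mulLeft k (ℓ ^ j)) = 𝒜 (i + j) := by
      refine le_antisymm (hle i j) ?_
      rw [← heq]
      rintro _ ⟨x, hx, rfl⟩
      refine ⟨ℓ ^ (i - m) * x, ?_, ?_⟩
      · have := pow_mul_mem_graded 𝒜 hℓ (i - m) hx
        rwa [show m + (i - m) = i by omega] at this
      · simp only [LinearMap.mulLeft_apply]
        rw [← mul_assoc, ← pow_add]
        congr 2
        omega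
    have hr := Submodule.finrank_map_le (LinearMap.mulLeft k (ℓ ^ j)) (𝒜 i)
    rw [hsurj] at hr ⊢
    exact (min_eq_right hr).symm

/-- A symmetric Hilbert function is realised by an injective linear map exchanging
complementary degrees. -/
lemma exists_reflection [FiniteDimensional k A] {a : ℕ} (ha : ∀ i, a < i → 𝒜 i = ⊥)
    (hsymm : ∀ i, i ≤ a → Module.finrank k (𝒜 i) = Module.finrank k (𝒜 (a - i))) :
    ∃ f : A →ₗ[k] A, Function.Injective f ∧ ∀ i, i ≤ a → ∀ x ∈ 𝒜 i, f x ∈ 𝒜 (a - i) := by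
  classical
  have he : ∀ i, ∃ e : 𝒜 i →ₗ[k] 𝒜 (a - i), Function.Injective e := by
    intro i
    by_cases h : i ≤ a
    · exact ⟨(LinearEquiv.ofFinrankEq _ _ (hsymm i h)).toLinearMap,
        (LinearEquiv.ofFinrankEq _ _ (hsymm i h)).injective⟩
    · refine ⟨0, fun x y _ => ?_⟩
      have hx := x.2
      have hy := y.2
      simp only [ha i (by omega), Submodule.mem_bot] at hx hy
      exact Subtype.ext (hx.trans hy.symm)
  choose e he using he
  let F : A →ₗ[k] A := (DirectSum.toModule k ℕ A fun i => (𝒜 (a - i)).subtype ∘ₗ e i) ∘ₗ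
    (DirectSum.decomposeLinearEquiv 𝒜).toLinearMap
  have hF : ∀ i (x : 𝒜 i), F x = e i x := by
    intro i x
    rw [LinearMap.comp_apply, LinearEquiv.coe_coe, DirectSum.decomposeLinearEquiv_apply,
      DirectSum.decompose_coe]
    exact DirectSum.toModule_lof (M := fun i => 𝒜 i) k i x
  refine ⟨F, ?_, fun i _ x hx => by rw [hF i ⟨x, hx⟩]; exact (e i _).2⟩
  rw [← LinearMap.ker_eq_bot, LinearMap.ker_eq_bot']
  intro x hx
  have hsum : x = ∑ i ∈ Finset.range (a + 1), (DirectSum.decompose 𝒜 x i : A) := by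
    conv_lhs => rw [← DirectSum.sum_support_decompose 𝒜 x]
    refine Finset.sum_subset_zero_on_sdiff ?_ ?_ fun _ _ => rfl
    · intro i hi
      rw [DFinsupp.mem_support_iff] at hi
      rw [Finset.mem_range]
      by_contra h
      apply hi
      have hbot : (DirectSum.decompose 𝒜 x i : A) ∈ (⊥ : Submodule k A) :=
        ha i (by omega) ▸ SetLike.coe_mem _
      exact Subtype.ext ((Submodule.mem_bot k).1 hbot)
    · intro i hi
      have := (Finset.mem_sdiff.1 hi).2
      rw [DFinsupp.notMem_support_iff] at this
      rw [this]; rfl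
  have hFx : F x = ∑ i ∈ Finset.range (a + 1), (e i (DirectSum.decompose 𝒜 x i) : A) := by
    conv_lhs => rw [hsum]
    rw [map_sum]
    exact Finset.sum_congr rfl fun i _ => hF i _
  rw [hsum]
  refine Finset.sum_eq_zero fun i hi => ?_
  have hcomp : (DirectSum.decompose 𝒜 (F x) (a - i) : A) = e i (DirectSum.decompose 𝒜 x i) := by
    rw [hFx, DirectSum.decompose_sum, DFinsupp.finsetSum_apply, AddSubmonoidClass.coe_finsetSum,
      Finset.sum_eq_single_of_mem i hi]
    · exact DirectSum.decompose_of_mem_same 𝒜 (e i _).2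
    · intro j hj hji
      refine DirectSum.decompose_of_mem_ne 𝒜 (e j _).2 ?_
      rw [Finset.mem_range] at hi hj
      omega
  rw [hx, DirectSum.decompose_zero] at hcomp
  have h0 : e i (DirectSum.decompose 𝒜 x i) = 0 := Subtype.ext hcomp.symm
  rw [(he i) (h0.trans (map_zero (e i)).symm)]
  rfl

end Graded

lemma tmul_mem_tensorGrading {k A B : Type*} [Field k] [CommRing A] [Algebra k A] [CommRing B]
    [Algebra k B] (𝒜 : ℕ → Submodule k A) (ℬ : ℕ → Submodule k B)
    {i j d : ℕ} (h : i + j = d) {x : A} (hx : x ∈ 𝒜 i) {y : B}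
    (hy : y ∈ ℬ j) : x ⊗ₜ[k] y ∈ tensorGrading 𝒜 ℬ d :=
  Submodule.mem_iSup_of_mem (i, j) (Submodule.mem_iSup_of_mem h
    (Submodule.apply_mem_map₂ (TensorProduct.mk k A B) hx hy))

section Tensor

variable {k A B : Type*} [Field k] [CommRing A] [Algebra k A] [CommRing B] [Algebra k B]
  (𝒜 : ℕ → Submodule k A) [GradedAlgebra 𝒜] [FiniteDimensional k A]
  (ℬ : ℕ → Submodule k B) [GradedAlgebra ℬ] [FiniteDimensional k B]

/-- The tensor product of two reflections embeds `C_d` into `C_(a+b-d)`; applied in both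
degrees, this is the symmetry of the Hilbert function of `C`. -/
lemma finrank_tensorGrading_le {a b : ℕ}
    (ha : ∀ i, a < i → 𝒜 i = ⊥) (hb : ∀ i, b < i → ℬ i = ⊥)
    (hsymmA : ∀ i, i ≤ a → Module.finrank k (𝒜 i) = Module.finrank k (𝒜 (a - i)))
    (hsymmB : ∀ i, i ≤ b → Module.finrank k (ℬ i) = Module.finrank k (ℬ (b - i))) (d : ℕ) :
    Module.finrank k (tensorGrading 𝒜 ℬ d) ≤
      Module.finrank k (tensorGrading 𝒜 ℬ (a + b - d)) := by
  obtain ⟨f, hf, hf'⟩ := exists_reflection 𝒜 ha hsymmA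
  obtain ⟨g, hg, hg'⟩ := exists_reflection ℬ hb hsymmB
  have hinj : Function.Injective (TensorProduct.map f g) :=
    TensorProduct.map_injective_of_flat_flat f g hf hg
  have hle : (tensorGrading 𝒜 ℬ d).map (TensorProduct.map f g) ≤
      tensorGrading 𝒜 ℬ (a + b - d) := by
    rw [Submodule.map_le_iff_le_comap, tensorGrading]
    refine iSup₂_le fun p hp => Submodule.map₂_le.2 fun x hx y hy => ?_
    rw [Submodule.mem_comap, TensorProduct.mk_apply, TensorProduct.map_tmul]
    by_cases h1 : p.1 ≤ a
    · by_cases h2 : p.2 ≤ b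
      · exact tmul_mem_tensorGrading 𝒜 ℬ (by omega) (hf' _ h1 x hx) (hg' _ h2 y hy)
      · rw [hb _ (by omega), Submodule.mem_bot] at hy
        simp [hy]
    · rw [ha _ (by omega), Submodule.mem_bot] at hx
      simp [hx]
  have h := Submodule.finrank_mono hle
  rwa [← (Submodule.equivMapOfInjective _ hinj (tensorGrading 𝒜 ℬ d)).finrank_eq] at h

/-- A strong Lefschetz element of `C` is injective from each degree `d ≤ (a + b) / 2` to the
complementary one. -/
lemma injective_of_isSL_tensor {a b : ℕ}
    (ha : ∀ i, a < i → 𝒜 i = ⊥) (hb : ∀ i, b < i → ℬ i = ⊥)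
    (hsymmA : ∀ i, i ≤ a → Module.finrank k (𝒜 i) = Module.finrank k (𝒜 (a - i)))
    (hsymmB : ∀ i, i ≤ b → Module.finrank k (ℬ i) = Module.finrank k (ℬ (b - i)))
    {ℓ : A ⊗[k] B} (hℓ : IsSL (tensorGrading 𝒜 ℬ) ℓ) {d : ℕ} (hd : 2 * d ≤ a + b)
    {z : A ⊗[k] B} (hz : z ∈ tensorGrading 𝒜 ℬ d) (h0 : ℓ ^ (a + b - 2 * d) * z = 0) :
    z = 0 := by
  have h := hℓ.2 d (a + b - 2 * d)
  rw [show d + (a + b - 2 * d) = a + b - d by omega,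
    min_eq_left (finrank_tensorGrading_le 𝒜 ℬ ha hb hsymmA hsymmB d),
    ← LinearMap.range_domRestrict] at h
  have hk := LinearMap.finrank_range_add_finrank_ker
    ((LinearMap.mulLeft k (ℓ ^ (a + b - 2 * d))).domRestrict (tensorGrading 𝒜 ℬ d))
  have hk0 := Submodule.finrank_eq_zero.1
    (Nat.add_left_cancel (hk.trans (h.symm.trans (add_zero _).symm)))
  have := (LinearMap.ker_eq_bot'.1 hk0) ⟨z, hz⟩ (by simpa using h0)
  exact congrArg Subtype.val this

end Tensor

/-- Let `A` and `B` be graded Artinian algebras over a field `k` with symmetric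
Hilbert functions and socle degrees `j_A = a`, `j_B = b`, let `C = A ⊗_k B`, and
assume `char k = 0` or `char k > a + b`.  If `ℓ_C = ℓ_A ⊗ 1 + 1 ⊗ ℓ_B ∈ C_1` is
a strong Lefschetz element for `C`, then `ℓ_A ∈ A_1` is strong Lefschetz for `A`
and `ℓ_B ∈ B_1` is strong Lefschetz for `B`. -/
theorem strongLefschetz_of_tensor_product
    {k A B : Type} [Field k] [CommRing A] [Algebra k A] [CommRing B] [Algebra k B]
    (𝒜 : ℕ → Submodule k A) [GradedAlgebra 𝒜] [FiniteDimensional k A]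
    (hconnA : 𝒜 0 = Submodule.span k {(1 : A)})
    (ℬ : ℕ → Submodule k B) [GradedAlgebra ℬ] [FiniteDimensional k B]
    (hconnB : ℬ 0 = Submodule.span k {(1 : B)})
    (jA jB : ℕ) (hjA : 𝒜 jA ≠ ⊥) (hjA' : ∀ i, jA < i → 𝒜 i = ⊥)
    (hjB : ℬ jB ≠ ⊥) (hjB' : ∀ i, jB < i → ℬ i = ⊥)
    (hsymmA : ∀ i, i ≤ jA →
      Module.finrank k (𝒜 i) = Module.finrank k (𝒜 (jA - i)))
    (hsymmB : ∀ i, i ≤ jB →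
      Module.finrank k (ℬ i) = Module.finrank k (ℬ (jB - i)))
    (hchar : ringChar k = 0 ∨ jA + jB < ringChar k)
    (ℓA : A) (hℓA : ℓA ∈ 𝒜 1) (ℓB : B) (hℓB : ℓB ∈ ℬ 1)
    (hC : IsSL (tensorGrading 𝒜 ℬ) ((ℓA ⊗ₜ[k] (1 : B)) + ((1 : A) ⊗ₜ[k] ℓB))) :
    IsSL 𝒜 ℓA ∧ IsSL ℬ ℓB := by
  have hntA : Nontrivial A := by
    obtain ⟨x, -, hx⟩ := Submodule.exists_mem_ne_zero_of_ne_bot hjA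
    exact ⟨x, 0, hx⟩
  have hntB : Nontrivial B := by
    obtain ⟨x, -, hx⟩ := Submodule.exists_mem_ne_zero_of_ne_bot hjB
    exact ⟨x, 0, hx⟩
  have hA1 : (1 : A) ∈ 𝒜 0 := SetLike.GradedOne.one_mem
  have hB1 : (1 : B) ∈ ℬ 0 := SetLike.GradedOne.one_mem
  constructor
  · refine isSL_of_injective 𝒜 hjA' hsymmA hℓA fun i hi x hx h0 => ?_
    have hz := injective_of_isSL_tensor 𝒜 ℬ hjA' hjB' hsymmA hsymmB hC (d := i) (by omega)
      (tmul_mem_tensorGrading 𝒜 ℬ (add_zero i) hx hB1) (by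
        rw [show jA + jB - 2 * i = (jA - 2 * i) + jB by omega]
        refine add_pow_mul_eq_zero ?_ ?_
        · simp [Algebra.TensorProduct.tmul_pow, h0]
        · simp [Algebra.TensorProduct.tmul_pow, pow_eq_zero_of_socle ℬ hℓB hjB'])
    refine Algebra.TensorProduct.includeLeft_injective (R := k) (S := k) (A := A) (B := B)
      (FaithfulSMul.algebraMap_injective k B) ?_
    simpa using hz
  · refine isSL_of_injective ℬ hjB' hsymmB hℓB fun i hi x hx h0 => ?_
    have hz := injective_of_isSL_tensor 𝒜 ℬ hjA' hjB' hsymmA hsymmB hC (d := i) (by omega)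
      (tmul_mem_tensorGrading 𝒜 ℬ (zero_add i) hA1 hx) (by
        rw [show jA + jB - 2 * i = (jB - 2 * i) + jA by omega, add_comm (ℓA ⊗ₜ[k] (1 : B))]
        refine add_pow_mul_eq_zero ?_ ?_
        · simp [Algebra.TensorProduct.tmul_pow, h0]
        · simp [Algebra.TensorProduct.tmul_pow, pow_eq_zero_of_socle 𝒜 hℓA hjA'])
    refine Algebra.TensorProduct.includeRight_injective (R := k) (A := A) (B := B)
      (FaithfulSMul.algebraMap_injective k A) ?_
    simpa using hz
end

section
/- Let m ≥ 3 and n ≥ 3 be integers and let A = ℂ[a,b]/(a^m − b^{m(n−1)}, ab) be graded with weights w(a) = n − 1 and w(b) = 1 (this is the relative coinvariant ring of the parabolic subgroup G(m,m,n−1) inside the complex reflection group G(m,m,n)). Then the Hilbert polynomial of A is p(A,t) = Σ_{i=0}^{m(n−1)} t^i + Σ_{i=1}^{m−1} t^{i(n−1)}; in particular H(A) is not unimodal and A is not strong Lefschetz. Nevertheless A has an element of strong Lefschetz Jordan type. -/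
/-!
Write `q = n - 1` and `N = m q`. In `A` one has `ab = 0` and `a ^ m = b ^ N`, hence
`a ^ (m + 1) = 0 = b ^ (N + 1)`, and `A` is spanned by the monomials `1, b, …, b ^ N` and
`a, …, a ^ (m - 1)` (`mk_monomial_mem`). They are linearly independent because the coefficient
functionals at `b ^ k` (`k < N`), at `a ^ k` (`1 ≤ k < m`), and the sum of the coefficients at
`b ^ N` and `a ^ m` vanish on the ideal and form the dual family (`coordFun_apply_of_mem`,
`coordFun_basisPoly`). Since each basis monomial is homogeneous, `A_d` is the span of the basis
monomials of weight `d`, which gives the Hilbert function.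

It takes the values `2, 1, 2` in degrees `q < q + 1 < 2 q`, so it is not unimodal. As `q ≥ 2`, the
piece `A_1` is spanned by `b`, and `b a = 0`, so no positive power of a linear form can give an injection
`A_q → A_{2q}`; both pieces have dimension `2`, so `A` is not strong Lefschetz.

The conjugate of the Hilbert function is `(N + 1, m - 1)`. The non-homogeneous element `ℓ = a + b`
has this Jordan type: with `c = a - b ^ (N - m + 1)`, the strings `ℓ ^ k` (`k ≤ N`) and `ℓ ^ k c`
(`k ≤ m - 2`) form a basis of `A`, and `ℓ ^ (N + 1) = 0 = ℓ ^ (m - 1) c`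
(`finrank_range_mulLeft_add_pow`).
-/

/-- `P` is the Jordan type (multiset of Jordan block sizes) of the `k`-linear
endomorphism `f`, characterized by the ranks of the powers of `f`. -/
def IsJordanTypeOf {k A : Type*} [Field k] [AddCommGroup A] [Module k A]
    (f : A →ₗ[k] A) (P : Multiset ℕ) : Prop :=
  (∀ p ∈ P, 0 < p) ∧
  ∀ j : ℕ, Module.finrank k (LinearMap.range (f ^ j)) = (P.map (fun p => p - j)).sum

/-- The conjugate partition of a Hilbert function `H` (whose values are bounded
by `n`): its `i`-th part (for `1 ≤ i ≤ n`) is `#{d | H d ≥ i}`; zero parts are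
discarded. -/
noncomputable def conjHilb (H : ℕ → ℕ) (n : ℕ) : Multiset ℕ :=
  ((Multiset.range n).map (fun i => Set.ncard {d : ℕ | i + 1 ≤ H d})).filter (fun c => 0 < c)

/-- A sequence of integers is unimodal. -/
def Unimodal (H : ℕ → ℕ) : Prop :=
  ∃ c : ℕ, (∀ i j : ℕ, i ≤ j → j ≤ c → H i ≤ H j) ∧ (∀ i j : ℕ, c ≤ i → i ≤ j → H j ≤ H i)

open MvPolynomial

/-! ### Ranks of the powers of `a + b` -/

/-- The span of a subfamily of a linearly independent family has dimension the number of its members. -/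
lemma finrank_span_subfamily {A ι : Type*} [AddCommGroup A] [Module ℂ A] [Fintype ι]
    {v : ι → A} (hv : LinearIndependent ℂ v) (p : ι → Prop) [DecidablePred p] :
    Module.finrank ℂ (Submodule.span ℂ (v '' {i | p i})) = (Finset.univ.filter p).card := by
  have h := finrank_span_eq_card (hv.comp (Subtype.val : {i // p i} → ι) Subtype.val_injective)
  rw [Set.range_comp, Subtype.range_coe_subtype, Fintype.card_subtype] at h
  exact h

/-- Counts the members of a disjoint union of two initial segments satisfying a predicate. -/
lemma card_filter_sum {r s : ℕ} (p : Fin r ⊕ Fin s → Prop) [DecidablePred p]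
    (p₁ p₂ : ℕ → Prop) [DecidablePred p₁] [DecidablePred p₂]
    (h₁ : ∀ k, p (Sum.inl k) ↔ p₁ k) (h₂ : ∀ k, p (Sum.inr k) ↔ p₂ k) :
    (Finset.univ.filter p).card =
      ((Finset.range r).filter p₁).card + ((Finset.range s).filter p₂).card := by
  rw [← Fintype.card_subtype, Fintype.card_congr Equiv.subtypeSum, Fintype.card_sum,
    Fintype.card_subtype, Fintype.card_subtype]
  congr 1
  · rw [Finset.card_filter, Finset.card_filter, Finset.sum_range]
    simp only [h₁]
  · rw [Finset.card_filter, Finset.card_filter, Finset.sum_range]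
    simp only [h₂]

lemma card_filter_le_range (r j : ℕ) : ((Finset.range r).filter (fun k => j ≤ k)).card = r - j := by
  have : (Finset.range r).filter (fun k => j ≤ k) = Finset.Ico j r := by
    ext k; simp; omega
  rw [this, Nat.card_Ico]

/-- The two Jordan strings of `a + b`: the powers of `a + b`, and the products of such powers with
`a - b ^ (N - m + 1)`. -/
def strings {A : Type*} [CommRing A] (m N : ℕ) (a b : A) : Fin (N + 1) ⊕ Fin (m - 1) → A :=
  Sum.elim (fun k => (a + b) ^ (k : ℕ)) (fun k => (a + b) ^ (k : ℕ) * (a - b ^ (N - m + 1)))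

/-- The position of an element in its string. -/
def stringPos {r s : ℕ} : Fin r ⊕ Fin s → ℕ := Sum.elim (fun k => (k : ℕ)) (fun k => (k : ℕ))

section Ranks

variable {A : Type*} [CommRing A] {m N : ℕ} {a b : A}

lemma add_pow_of_mul_eq_zero (hab : a * b = 0) (k : ℕ) :
    (a + b) ^ (k + 1) = a ^ (k + 1) + b ^ (k + 1) := by
  induction k with
  | zero => simp
  | succ k ih =>
    rw [pow_succ, ih]
    linear_combination (a ^ k + b ^ k) * hab

lemma pow_left_eq_zero (hab : a * b = 0) (hN : 1 ≤ N) (h : a ^ m = b ^ N) {k : ℕ} (hk : m < k) :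
    a ^ k = 0 := by
  obtain ⟨r, rfl⟩ := Nat.exists_eq_add_of_lt hk
  obtain ⟨M, rfl⟩ := Nat.exists_eq_add_of_le' hN
  rw [show m + r + 1 = m + (r + 1) by ring, pow_add, h]
  linear_combination (b ^ M * a ^ r) * hab

lemma pow_right_eq_zero (hab : a * b = 0) (hm : 1 ≤ m) (h : a ^ m = b ^ N) {k : ℕ} (hk : N < k) :
    b ^ k = 0 :=
  pow_left_eq_zero (by rw [mul_comm, hab]) hm h.symm hk

/-- Closed form for the second string. -/
lemma add_pow_mul_sub (hab : a * b = 0) (k : ℕ) :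
    (a + b) ^ k * (a - b ^ (N - m + 1)) = a ^ (k + 1) - b ^ (N - m + (k + 1)) := by
  rcases k with _ | k
  · simp
  · rw [add_pow_of_mul_eq_zero hab]
    linear_combination (b ^ k - a ^ k * b ^ (N - m)) * hab

variable [Algebra ℂ A]

lemma pow_mem_span_strings (hab : a * b = 0) (hm : 1 ≤ m) (hmN : m < N) (h : a ^ m = b ^ N)
    (j k : ℕ) (hj : j ≤ k) :
    (a + b) ^ k ∈ Submodule.span ℂ (strings m N a b '' {i | j ≤ stringPos i}) := by
  by_cases hk : k < N + 1
  · exact Submodule.subset_span ⟨Sum.inl ⟨k, hk⟩, hj, rfl⟩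
  · obtain ⟨r, rfl⟩ := Nat.exists_eq_add_of_le' (show 1 ≤ k by omega)
    rw [add_pow_of_mul_eq_zero hab, pow_left_eq_zero hab (by omega) h (by omega),
      pow_right_eq_zero hab hm h (by omega), add_zero]
    exact Submodule.zero_mem _

lemma pow_mul_mem_span_strings (hab : a * b = 0) (hm : 1 ≤ m) (hmN : m < N) (h : a ^ m = b ^ N)
    (j k : ℕ) (hj : j ≤ k) :
    (a + b) ^ k * (a - b ^ (N - m + 1)) ∈
      Submodule.span ℂ (strings m N a b '' {i | j ≤ stringPos i}) := by
  by_cases hk : k < m - 1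
  · exact Submodule.subset_span ⟨Sum.inr ⟨k, hk⟩, hj, rfl⟩
  · have h0 : a ^ (k + 1) - b ^ (N - m + (k + 1)) = 0 := by
      obtain ⟨r, hr⟩ := Nat.exists_eq_add_of_le (show m ≤ k + 1 by omega)
      rcases r with _ | r
      · rw [hr, add_zero, h, Nat.sub_add_cancel hmN.le, sub_self]
      · rw [pow_left_eq_zero hab (by omega) h (by omega),
          pow_right_eq_zero hab hm h (by omega), sub_self]
    rw [add_pow_mul_sub hab, h0]
    exact Submodule.zero_mem _

/-- The strings span: modulo their span, `b ^ k ≡ -a ^ k ≡ -b ^ (N - m + k)` for `k ≥ 1`, and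
`N - m > 0`, so descending induction on `k` applies. -/
lemma span_strings_eq_top (hab : a * b = 0) (hm : 1 ≤ m) (hmN : m < N) (h : a ^ m = b ^ N)
    (hspan : ∀ S : Submodule ℂ A, (∀ k, a ^ k ∈ S) → (∀ k, b ^ k ∈ S) → S = ⊤) :
    Submodule.span ℂ (Set.range (strings m N a b)) = ⊤ := by
  have e : Set.range (strings m N a b) = strings m N a b '' {i | 0 ≤ stringPos i} := by simp
  rw [e]
  have hu := fun k => pow_mem_span_strings hab hm hmN h 0 k (Nat.zero_le _)
  have hv := fun k => pow_mul_mem_span_strings hab hm hmN h 0 k (Nat.zero_le _)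
  generalize Submodule.span ℂ (strings m N a b '' {i | 0 ≤ stringPos i}) = S at hu hv
  have hone : (1 : A) ∈ S := by simpa using hu 0
  have hb : ∀ t k, N + 1 ≤ k + 1 + t → b ^ (k + 1) ∈ S := by
    intro t
    induction t with
    | zero =>
      intro k hk
      rw [pow_right_eq_zero hab hm h (by omega)]
      exact S.zero_mem
    | succ t ih =>
      intro k hk
      have h1 := ih (N - m + k) (by omega)
      have h2 := S.sub_mem (S.sub_mem (hu (k + 1)) (hv k)) h1
      rw [add_pow_mul_sub hab, add_pow_of_mul_eq_zero hab] at h2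
      convert h2 using 1
      ring
  have hb' : ∀ k, b ^ k ∈ S := by
    rintro (_ | k)
    · simpa using hone
    · exact hb N k (by omega)
  refine hspan S ?_ hb'
  rintro (_ | k)
  · simpa using hone
  · have h2 := S.sub_mem (hu (k + 1)) (hb' (k + 1))
    rwa [add_pow_of_mul_eq_zero hab, add_sub_cancel_right] at h2

/-- The ranks of the powers of `a + b` are those of a nilpotent endomorphism with Jordan blocks of
sizes `N + 1` and `m - 1`. -/
lemma finrank_range_mulLeft_add_pow (hab : a * b = 0) (hm : 1 ≤ m) (hmN : m < N)
    (h : a ^ m = b ^ N)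
    (hspan : ∀ S : Submodule ℂ A, (∀ k, a ^ k ∈ S) → (∀ k, b ^ k ∈ S) → S = ⊤)
    (hdim : Module.finrank ℂ A = N + m) (j : ℕ) :
    Module.finrank ℂ (LinearMap.range (LinearMap.mulLeft ℂ (a + b) ^ j)) =
      (N + 1 - j) + (m - 1 - j) := by
  have htop := span_strings_eq_top hab hm hmN h hspan
  have hli : LinearIndependent ℂ (strings m N a b) :=
    linearIndependent_of_top_le_span_of_card_eq_finrank htop.ge (by simp [hdim]; omega)
  have hr : LinearMap.range (LinearMap.mulLeft ℂ (a + b) ^ j) =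
      Submodule.span ℂ (strings m N a b '' {i | j ≤ stringPos i}) := by
    rw [LinearMap.pow_mulLeft]
    apply le_antisymm
    · rw [LinearMap.range_eq_map, ← htop, Submodule.map_span, Submodule.span_le]
      rintro _ ⟨_, ⟨i, rfl⟩, rfl⟩
      rcases i with k | k
      · have := pow_mem_span_strings hab hm hmN h j (j + k) (by omega)
        simpa [strings, pow_add] using this
      · have := pow_mul_mem_span_strings hab hm hmN h j (j + k) (by omega)
        simpa [strings, pow_add, mul_assoc] using this
    · rw [Submodule.span_le]
      rintro _ ⟨i, hi, rfl⟩
      rcases i with k | k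
      · refine ⟨(a + b) ^ ((k : ℕ) - j), ?_⟩
        have hi : j ≤ (k : ℕ) := hi
        simp [strings, ← pow_add, Nat.add_sub_cancel' hi]
      · refine ⟨(a + b) ^ ((k : ℕ) - j) * (a - b ^ (N - m + 1)), ?_⟩
        have hi : j ≤ (k : ℕ) := hi
        simp [strings, ← mul_assoc, ← pow_add, Nat.add_sub_cancel' hi]
  rw [hr, finrank_span_subfamily hli, card_filter_sum _ (fun k => j ≤ k) (fun k => j ≤ k)
    (fun _ => Iff.rfl) (fun _ => Iff.rfl), card_filter_le_range, card_filter_le_range]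

end Ranks

/-! ### The monomial basis and the Hilbert function -/

/-- The ideal `(a ^ m - b ^ N, ab)`. -/
noncomputable def relIdeal (m N : ℕ) : Ideal (MvPolynomial (Fin 2) ℂ) :=
  Ideal.span {X 0 ^ m - X 1 ^ N, X 0 * X 1}

/-- The monomials `b ^ k` (`0 ≤ k ≤ N`) and `a ^ k` (`1 ≤ k ≤ m - 1`). -/
noncomputable def basisPoly (m N : ℕ) : Fin (N + 1) ⊕ Fin (m - 1) → MvPolynomial (Fin 2) ℂ :=
  Sum.elim (fun k => X 1 ^ (k : ℕ)) (fun k => X 0 ^ ((k : ℕ) + 1))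

/-- The weights of the monomials `basisPoly`, where `a` has weight `q` and `b` weight `1`. -/
def basisDeg (m N q : ℕ) : Fin (N + 1) ⊕ Fin (m - 1) → ℕ :=
  Sum.elim (fun k => (k : ℕ)) (fun k => ((k : ℕ) + 1) * q)

/-- Coordinate functionals for `basisPoly` modulo `relIdeal`: coefficients of pure powers, except
that `a ^ m` contributes to the coordinate of `b ^ N`. -/
noncomputable def coordFun (m N : ℕ) :
    MvPolynomial (Fin 2) ℂ →ₗ[ℂ] (Fin (N + 1) ⊕ Fin (m - 1) → ℂ) :=
  LinearMap.pi (Sum.elim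
    (fun k => lcoeff ℂ (Finsupp.single 1 (k : ℕ)) +
      if (k : ℕ) = N then lcoeff ℂ (Finsupp.single 0 m) else 0)
    (fun k => lcoeff ℂ (Finsupp.single 0 ((k : ℕ) + 1))))

lemma coordFun_inl (m N : ℕ) (f : MvPolynomial (Fin 2) ℂ) (k : Fin (N + 1)) :
    coordFun m N f (Sum.inl k) = coeff (Finsupp.single 1 (k : ℕ)) f +
      if (k : ℕ) = N then coeff (Finsupp.single 0 m) f else 0 := by
  by_cases hk : (k : ℕ) = N <;> simp [coordFun, hk]

lemma coordFun_inr (m N : ℕ) (f : MvPolynomial (Fin 2) ℂ) (k : Fin (m - 1)) :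
    coordFun m N f (Sum.inr k) = coeff (Finsupp.single 0 ((k : ℕ) + 1)) f := rfl

lemma coeff_X_pow_single (i j : Fin 2) (k l : ℕ) :
    coeff (Finsupp.single j l) (X i ^ k : MvPolynomial (Fin 2) ℂ) =
      if (i = j ∧ k = l) ∨ (k = 0 ∧ l = 0) then 1 else 0 := by
  simp only [coeff_X_pow, Finsupp.single_eq_single_iff]

lemma coordFun_apply_of_mem {m N : ℕ} (hm : 1 ≤ m) (hN : 1 ≤ N) {f : MvPolynomial (Fin 2) ℂ}
    (hf : f ∈ relIdeal m N) : coordFun m N f = 0 := by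
  obtain ⟨x, y, rfl⟩ := Ideal.mem_span_pair.1 hf
  have e0 : ∀ k, (X 0 ^ k : MvPolynomial (Fin 2) ℂ) = monomial (Finsupp.single 0 k) 1 :=
    fun k => X_pow_eq_monomial
  have e1 : ∀ k, (X 1 ^ k : MvPolynomial (Fin 2) ℂ) = monomial (Finsupp.single 1 k) 1 :=
    fun k => X_pow_eq_monomial
  have e2 : (X 0 * X 1 : MvPolynomial (Fin 2) ℂ) =
      monomial (Finsupp.single 0 1 + Finsupp.single 1 1) 1 := by
    simp [X, monomial_mul]
  rw [e0, e1, e2]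
  funext i
  rcases i with k | k
  · have hk := k.2
    rw [coordFun_inl]
    by_cases hkN : (k : ℕ) = N
    · simp [mul_sub, coeff_mul_monomial', Finsupp.le_def, Fin.forall_fin_two, hkN,
        show m ≠ 0 by omega, show N ≠ 0 by omega]
    · simp [mul_sub, coeff_mul_monomial', Finsupp.le_def, Fin.forall_fin_two, hkN,
        show m ≠ 0 by omega, show ¬ N ≤ k by omega]
  · have hk := k.2
    rw [coordFun_inr]
    simp [-Finsupp.single_add, mul_sub, coeff_mul_monomial', Finsupp.le_def, Fin.forall_fin_two,
      show N ≠ 0 by omega, show ¬ m ≤ k + 1 by omega]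

lemma coordFun_basisPoly {m N : ℕ} (hm : 1 ≤ m) (hN : 1 ≤ N) (i : Fin (N + 1) ⊕ Fin (m - 1)) :
    coordFun m N (basisPoly m N i) = Pi.single i 1 := by
  funext j
  rcases i with k | k <;> rcases j with l | l
  · simp only [coordFun_inl, basisPoly, Sum.elim_inl, coeff_X_pow_single, Pi.single_apply,
      Sum.inl.injEq, Fin.ext_iff]
    grind
  · simp only [coordFun_inr, basisPoly, Sum.elim_inl, coeff_X_pow_single, Pi.single_apply]
    grind
  · have hk := k.2
    simp only [coordFun_inl, basisPoly, Sum.elim_inr, coeff_X_pow_single, Pi.single_apply]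
    grind
  · simp only [coordFun_inr, basisPoly, Sum.elim_inr, coeff_X_pow_single, Pi.single_apply,
      Sum.inr.injEq, Fin.ext_iff]
    grind

/-- The images of the monomials `basisPoly` in the quotient. -/
noncomputable def basisVec (m N : ℕ) :
    Fin (N + 1) ⊕ Fin (m - 1) → MvPolynomial (Fin 2) ℂ ⧸ relIdeal m N :=
  fun i => Ideal.Quotient.mk _ (basisPoly m N i)

lemma linearIndependent_basisVec {m N : ℕ} (hm : 1 ≤ m) (hN : 1 ≤ N) :
    LinearIndependent ℂ (basisVec m N) := by
  rw [Fintype.linearIndependent_iff]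
  intro g hg i
  have h1 : Ideal.Quotient.mk (relIdeal m N) (∑ i, g i • basisPoly m N i) = 0 := by
    rw [← hg, map_sum]
    rfl
  have h2 := coordFun_apply_of_mem hm hN (Ideal.Quotient.eq_zero_iff_mem.1 h1)
  rw [map_sum] at h2
  simp only [map_smul, coordFun_basisPoly hm hN] at h2
  have h3 := congrFun h2 i
  simpa [Finset.sum_apply, Pi.single_apply] using h3

section Quotient

variable {m q : ℕ}

lemma mk_mul_eq_zero (m N : ℕ) : Ideal.Quotient.mk (relIdeal m N) (X 0) *
    Ideal.Quotient.mk (relIdeal m N) (X 1) = 0 := by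
  rw [← map_mul, Ideal.Quotient.eq_zero_iff_mem]
  exact Ideal.subset_span (by simp)

lemma mk_pow_eq (m N : ℕ) : Ideal.Quotient.mk (relIdeal m N) (X 0) ^ m =
    Ideal.Quotient.mk (relIdeal m N) (X 1) ^ N := by
  rw [← sub_eq_zero, ← map_pow, ← map_pow, ← map_sub, Ideal.Quotient.eq_zero_iff_mem]
  exact Ideal.subset_span (by simp)

/-- Every monomial `a ^ r b ^ s` lies in the span of the basis monomials of the same weight; it is in
fact zero or one of them. -/
lemma mk_monomial_mem (hm : 1 ≤ m) (hq : 1 ≤ q) (r s : ℕ) :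
    Ideal.Quotient.mk (relIdeal m (m * q)) (X 0) ^ r *
      Ideal.Quotient.mk (relIdeal m (m * q)) (X 1) ^ s ∈
      Submodule.span ℂ (basisVec m (m * q) '' {i | basisDeg m (m * q) q i = r * q + s}) := by
  have hN : 1 ≤ m * q := Nat.mul_pos hm hq
  have hab := mk_mul_eq_zero m (m * q)
  have h := mk_pow_eq m (m * q)
  have hb : ∀ k, Ideal.Quotient.mk (relIdeal m (m * q)) (X 1) ^ k ∈
      Submodule.span ℂ (basisVec m (m * q) '' {i | basisDeg m (m * q) q i = k}) := by
    intro k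
    by_cases hk : k < m * q + 1
    · exact Submodule.subset_span ⟨Sum.inl ⟨k, hk⟩, rfl, by simp [basisVec, basisPoly]⟩
    · rw [pow_right_eq_zero hab hm h (by omega)]
      exact Submodule.zero_mem _
  rcases r with _ | r
  · simpa using hb s
  rcases s with _ | s
  · rw [pow_zero, mul_one, add_zero]
    rcases lt_trichotomy (r + 1) m with h1 | h1 | h1
    · exact Submodule.subset_span ⟨Sum.inr ⟨r, by omega⟩, rfl, by simp [basisVec, basisPoly]⟩
    · rw [h1, h]
      exact hb _
    · rw [pow_left_eq_zero hab hN h h1]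
      exact Submodule.zero_mem _
  · rw [pow_succ, pow_succ', mul_assoc, ← mul_assoc (_ : _ ⧸ _) _ (_ ^ s), hab]
    simp

lemma monomial_fin_two (s : Fin 2 →₀ ℕ) (c : ℂ) :
    (monomial s c : MvPolynomial (Fin 2) ℂ) = c • (X 0 ^ s 0 * X 1 ^ s 1) := by
  rw [monomial_eq, Finsupp.prod_fintype _ _ (by simp), Fin.prod_univ_two, smul_eq_C_mul]

lemma mk_mem_of_isWeightedHomogeneous (hm : 1 ≤ m) (hq : 1 ≤ q) {d : ℕ}
    {f : MvPolynomial (Fin 2) ℂ} (hf : f.IsWeightedHomogeneous ![q, 1] d) :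
    Ideal.Quotient.mk (relIdeal m (m * q)) f ∈
      Submodule.span ℂ (basisVec m (m * q) '' {i | basisDeg m (m * q) q i = d}) := by
  rw [f.as_sum, map_sum]
  refine Submodule.sum_mem _ fun s hs => ?_
  have hw := hf (mem_support_iff.1 hs)
  rw [Finsupp.weight_apply, Finsupp.sum_fintype _ _ (by simp), Fin.sum_univ_two] at hw
  have hw' : s 0 * q + s 1 = d := by simpa using hw
  have h1 := mk_monomial_mem hm hq (s 0) (s 1)
  rw [hw', ← map_pow, ← map_pow, ← map_mul] at h1
  rw [monomial_fin_two]
  exact Submodule.smul_mem _ _ h1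

lemma basisPoly_isWeightedHomogeneous (N : ℕ) (i : Fin (N + 1) ⊕ Fin (m - 1)) :
    (basisPoly m N i).IsWeightedHomogeneous ![q, 1] (basisDeg m N q i) := by
  rcases i with k | k
  · have := (isWeightedHomogeneous_X ℂ ![q, 1] (1 : Fin 2)).pow (k : ℕ)
    simpa [basisPoly, basisDeg] using this
  · have := (isWeightedHomogeneous_X ℂ ![q, 1] (0 : Fin 2)).pow ((k : ℕ) + 1)
    simpa [basisPoly, basisDeg] using this

/-- The graded piece of weight `d` is spanned by the basis monomials of weight `d`. -/
lemma graded_eq_span (hm : 1 ≤ m) (hq : 1 ≤ q) (d : ℕ) :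
    Submodule.span ℂ ((Ideal.Quotient.mk (relIdeal m (m * q))) ''
      {f | f.IsWeightedHomogeneous ![q, 1] d}) =
      Submodule.span ℂ (basisVec m (m * q) '' {i | basisDeg m (m * q) q i = d}) := by
  apply le_antisymm
  · rw [Submodule.span_le]
    rintro _ ⟨f, hf, rfl⟩
    exact mk_mem_of_isWeightedHomogeneous hm hq hf
  · refine Submodule.span_mono ?_
    rintro _ ⟨i, rfl, rfl⟩
    exact ⟨_, basisPoly_isWeightedHomogeneous _ i, rfl⟩

/-- A subspace of the quotient containing all powers of `a` and of `b` is everything. -/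
lemma eq_top_of_pow_mem (N : ℕ) (S : Submodule ℂ (MvPolynomial (Fin 2) ℂ ⧸ relIdeal m N))
    (ha : ∀ k, Ideal.Quotient.mk (relIdeal m N) (X 0) ^ k ∈ S)
    (hb : ∀ k, Ideal.Quotient.mk (relIdeal m N) (X 1) ^ k ∈ S) : S = ⊤ := by
  rw [eq_top_iff]
  rintro x -
  obtain ⟨f, rfl⟩ := Ideal.Quotient.mk_surjective x
  rw [f.as_sum, map_sum]
  refine Submodule.sum_mem _ fun s _ => ?_
  rw [monomial_fin_two]
  refine S.smul_mem _ (?_ : Ideal.Quotient.mk (relIdeal m N) (X 0 ^ s 0 * X 1 ^ s 1) ∈ S)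
  rw [map_mul, map_pow, map_pow]
  rcases s 0 with _ | r
  · simpa using hb _
  rcases s 1 with _ | t
  · simpa using ha _
  rw [pow_succ, pow_succ', mul_assoc, ← mul_assoc (_ : _ ⧸ _) _ (_ ^ t), mk_mul_eq_zero]
  simp

lemma finrank_quotient (hm : 1 ≤ m) (hq : 1 ≤ q) :
    Module.finrank ℂ (MvPolynomial (Fin 2) ℂ ⧸ relIdeal m (m * q)) = m * q + m := by
  have hN : 1 ≤ m * q := Nat.mul_pos hm hq
  have htop : Submodule.span ℂ (Set.range (basisVec m (m * q))) = ⊤ := by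
    refine eq_top_of_pow_mem _ _ (fun k => ?_) (fun k => ?_)
    · have := mk_monomial_mem hm hq k 0
      rw [pow_zero, mul_one] at this
      exact Submodule.span_mono (Set.image_subset_range _ _) this
    · have := mk_monomial_mem hm hq 0 k
      rw [pow_zero, one_mul] at this
      exact Submodule.span_mono (Set.image_subset_range _ _) this
  rw [← finrank_top, ← htop, finrank_span_eq_card (linearIndependent_basisVec hm hN)]
  simp
  omega

lemma finrank_graded (hm : 1 ≤ m) (hq : 1 ≤ q) (d : ℕ) :
    Module.finrank ℂ (Submodule.span ℂ
      (basisVec m (m * q) '' {i | basisDeg m (m * q) q i = d})) =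
      (if d ≤ m * q then 1 else 0) +
        ((Finset.Icc 1 (m - 1)).filter (fun i => i * q = d)).card := by
  have hN : 1 ≤ m * q := Nat.mul_pos hm hq
  rw [finrank_span_subfamily (linearIndependent_basisVec hm hN),
    card_filter_sum _ (fun k => k = d) (fun k => (k + 1) * q = d)
      (fun _ => Iff.rfl) (fun _ => Iff.rfl)]
  congr 1
  · rw [Finset.filter_eq']
    by_cases hd : d ≤ m * q
    · simp [hd, Nat.lt_succ_of_le hd]
    · simp [hd]
  · refine Finset.card_bij (fun k _ => k + 1) ?_ ?_ ?_
    · intro k hk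
      simp at hk ⊢
      exact ⟨by omega, hk.2⟩
    · intro k _ l _ hkl
      omega
    · intro k hk
      simp at hk
      exact ⟨k - 1, by simp [Nat.sub_add_cancel hk.1.1, hk.2]; omega, by omega⟩

end Quotient

/-! ### Combinatorics of the Hilbert function -/

/-- The asserted Hilbert function, with `q = n - 1`. -/
def hilb (m q d : ℕ) : ℕ :=
  (if d ≤ m * q then 1 else 0) + ((Finset.Icc 1 (m - 1)).filter (fun i => i * q = d)).card

section Hilb

variable {m q : ℕ}

/-- There is a second basis monomial exactly in the degrees `i q` with `1 ≤ i ≤ m - 1`. -/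
lemma card_filter_mul_eq (hq : 1 ≤ q) (d : ℕ) :
    ((Finset.Icc 1 (m - 1)).filter (fun i => i * q = d)).card =
      if d ∈ (Finset.Icc 1 (m - 1)).image (· * q) then 1 else 0 := by
  split_ifs with h
  · obtain ⟨i, hi, rfl⟩ := Finset.mem_image.1 h
    rw [Finset.card_eq_one]
    refine ⟨i, ?_⟩
    ext j
    simp only [Finset.mem_filter, Finset.mem_singleton]
    exact ⟨fun hj => Nat.eq_of_mul_eq_mul_right hq hj.2, fun hj => by subst hj; exact ⟨hi, rfl⟩⟩
  · rw [Finset.card_eq_zero, Finset.filter_eq_empty_iff]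
    exact fun i hi hd => h (Finset.mem_image.2 ⟨i, hi, hd⟩)

lemma le_of_mem_image {d : ℕ} (h : d ∈ (Finset.Icc 1 (m - 1)).image (· * q)) : d ≤ m * q := by
  obtain ⟨i, hi, rfl⟩ := Finset.mem_image.1 h
  rw [Finset.mem_Icc] at hi
  exact Nat.mul_le_mul_right _ (by omega)

lemma one_le_hilb_iff (hq : 1 ≤ q) (d : ℕ) : 1 ≤ hilb m q d ↔ d ≤ m * q := by
  have := le_of_mem_image (m := m) (q := q) (d := d)
  rw [hilb, card_filter_mul_eq hq]
  split_ifs <;> grind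

lemma two_le_hilb_iff (hq : 1 ≤ q) (d : ℕ) :
    2 ≤ hilb m q d ↔ d ∈ (Finset.Icc 1 (m - 1)).image (· * q) := by
  have := le_of_mem_image (m := m) (q := q) (d := d)
  rw [hilb, card_filter_mul_eq hq]
  split_ifs <;> grind

lemma hilb_le_two (hq : 1 ≤ q) (d : ℕ) : hilb m q d ≤ 2 := by
  rw [hilb, card_filter_mul_eq hq]
  split_ifs <;> omega

lemma hilb_succ_le (hq : 2 ≤ q) : hilb m q (q + 1) ≤ 1 := by
  by_contra hc
  have := (two_le_hilb_iff (m := m) (q := q) (by omega) (q + 1)).1 (by omega)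
  obtain ⟨i, hi, h⟩ := Finset.mem_image.1 this
  rcases i with _ | _ | i
  · simp at hi
  · simp at h
  · nlinarith

lemma hilb_self (hm : 3 ≤ m) (hq : 1 ≤ q) : hilb m q q = 2 :=
  le_antisymm (hilb_le_two hq _) ((two_le_hilb_iff hq _).2
    (Finset.mem_image.2 ⟨1, Finset.mem_Icc.2 (by omega), by ring⟩))

lemma hilb_two_mul (hm : 3 ≤ m) (hq : 1 ≤ q) : hilb m q (q + q) = 2 :=
  le_antisymm (hilb_le_two hq _) ((two_le_hilb_iff hq _).2
    (Finset.mem_image.2 ⟨2, Finset.mem_Icc.2 (by omega), by ring⟩))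

lemma not_unimodal_hilb (hm : 3 ≤ m) (hq : 2 ≤ q) : ¬ Unimodal (hilb m q) := by
  rintro ⟨c, h1, h2⟩
  have e1 := hilb_self hm (show 1 ≤ q by omega)
  have e2 := hilb_two_mul hm (show 1 ≤ q by omega)
  have e3 := hilb_succ_le (m := m) hq
  rcases le_total (q + 1) c with h | h
  · have := h1 q (q + 1) (by omega) h
    omega
  · have := h2 (q + 1) (q + q) h (by omega)
    omega

lemma conjHilb_hilb (hm : 3 ≤ m) (hq : 1 ≤ q) {D : ℕ} (hD : 2 ≤ D) :
    conjHilb (hilb m q) D = {m * q + 1, m - 1} := by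
  obtain ⟨r, rfl⟩ := Nat.exists_eq_add_of_le hD
  have h0 : Set.ncard {d : ℕ | 0 + 1 ≤ hilb m q d} = m * q + 1 := by
    have : {d : ℕ | 0 + 1 ≤ hilb m q d} = ((Finset.range (m * q + 1) : Finset ℕ) : Set ℕ) := by
      ext d
      rw [Finset.coe_range, Set.mem_Iio, Nat.lt_succ_iff]
      exact one_le_hilb_iff hq d
    rw [this, Set.ncard_coe_finset, Finset.card_range]
  have h1 : Set.ncard {d : ℕ | 1 + 1 ≤ hilb m q d} = m - 1 := by
    have : {d : ℕ | 1 + 1 ≤ hilb m q d} =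
        (((Finset.Icc 1 (m - 1)).image (· * q) : Finset ℕ) : Set ℕ) := by
      ext d
      exact two_le_hilb_iff hq d
    rw [this, Set.ncard_coe_finset, Finset.card_image_of_injective, Nat.card_Icc]
    · omega
    · exact fun i j hij => Nat.eq_of_mul_eq_mul_right hq hij
  have h2 : ∀ i, Set.ncard {d : ℕ | 2 + i + 1 ≤ hilb m q d} = 0 := by
    intro i
    have : {d : ℕ | 2 + i + 1 ≤ hilb m q d} = ∅ := by
      ext d
      have := hilb_le_two (m := m) hq d
      simp
      omega
    rw [this, Set.ncard_empty]
  have hr : Multiset.range 2 = {0, 1} := rfl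
  rw [conjHilb, Multiset.range_add, Multiset.map_add, Multiset.map_map, Multiset.filter_add]
  have hz : Multiset.filter (fun c => 0 < c) (Multiset.map
      ((fun i => Set.ncard {d : ℕ | i + 1 ≤ hilb m q d}) ∘ fun x => 2 + x)
      (Multiset.range r)) = 0 := by
    rw [Multiset.filter_eq_nil]
    intro c hc
    obtain ⟨i, -, rfl⟩ := Multiset.mem_map.1 hc
    exact (h2 i).not_gt
  rw [hz, add_zero, hr]
  simp only [Multiset.insert_eq_cons, Multiset.map_cons, Multiset.map_singleton, h0, h1]
  rw [Multiset.filter_eq_self]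
  intro c hc
  simp at hc
  omega

end Hilb

/-- A degree-one element is a multiple of `b` because `a` has weight at least `2`; it kills `a`, so
its positive powers have rank at most `1` on the two-dimensional piece of weight `q`. -/
lemma not_isSL {m q : ℕ} (hm : 3 ≤ m) (hq : 2 ≤ q)
    (𝒜 : ℕ → Submodule ℂ (MvPolynomial (Fin 2) ℂ ⧸ relIdeal m (m * q)))
    (h𝒜 : ∀ d, 𝒜 d =
      Submodule.span ℂ (basisVec m (m * q) '' {i | basisDeg m (m * q) q i = d}))
    (hrank : ∀ d, Module.finrank ℂ (𝒜 d) = hilb m q d) : ¬ ∃ ℓ, IsSL 𝒜 ℓ := by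
  rintro ⟨ℓ, hℓ, hsl⟩
  have hkill : Ideal.Quotient.mk (relIdeal m (m * q)) (X 0) * ℓ = 0 := by
    have hle : 𝒜 1 ≤ LinearMap.ker
        (LinearMap.mulLeft ℂ (Ideal.Quotient.mk (relIdeal m (m * q)) (X 0))) := by
      rw [h𝒜, Submodule.span_le]
      rintro _ ⟨k | k, hk, rfl⟩
      · have hk : (k : ℕ) = 1 := hk
        simp [basisVec, basisPoly, hk, mk_mul_eq_zero]
      · have hk : ((k : ℕ) + 1) * q = 1 := hk
        have := Nat.eq_one_of_mul_eq_one_left hk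
        omega
    exact hle hℓ
  have h := hsl q q
  rw [hrank, hrank, hilb_self hm (by omega), hilb_two_mul hm (by omega), min_self] at h
  have hle : (𝒜 q).map (LinearMap.mulLeft ℂ (ℓ ^ q)) ≤
      Submodule.span ℂ {ℓ ^ q * Ideal.Quotient.mk (relIdeal m (m * q)) (X 1) ^ q} := by
    rw [h𝒜, Submodule.map_span, Submodule.span_le]
    rintro _ ⟨_, ⟨k | k, hk, rfl⟩, rfl⟩
    · have hk : (k : ℕ) = q := hk
      refine Submodule.subset_span ?_
      simp [basisVec, basisPoly, hk]
    · obtain ⟨r, rfl⟩ := Nat.exists_eq_add_of_le' (show 1 ≤ q by omega)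
      have : ℓ ^ (r + 1) * basisVec m (m * (r + 1)) (Sum.inr k) = 0 := by
        simp only [basisVec, basisPoly, Sum.elim_inr, map_pow]
        rw [pow_succ, pow_succ]
        linear_combination (ℓ ^ r * Ideal.Quotient.mk _ (X 0) ^ (k : ℕ)) * hkill
      simp [this]
  have h1 := (Submodule.finrank_mono hle).trans (finrank_span_le_card _)
  simp at h1
  omega

/-- Let `m, n ≥ 3` and let `A = ℂ[a,b]/(a^m − b^{m(n−1)}, ab)` be graded with
weights `w(a) = n − 1`, `w(b) = 1` (this is the relative coinvariant ring of the
parabolic subgroup `G(m,m,n−1)` inside the complex reflection group `G(m,m,n)`).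
Then the Hilbert polynomial of `A` is
`p(A,t) = Σ_{i=0}^{m(n−1)} t^i + Σ_{i=1}^{m−1} t^{i(n−1)}`; in particular `H(A)`
is not unimodal and `A` is not strong Lefschetz.  Nevertheless `A` has an
element of strong Lefschetz Jordan type. -/
theorem relCoinvariants_Gmmn
    (m n : ℕ) (hm : 3 ≤ m) (hn : 3 ≤ n)
    (I : Ideal (MvPolynomial (Fin 2) ℂ))
    (hI : I = Ideal.span {X 0 ^ m - X 1 ^ (m * (n - 1)), X 0 * X 1})
    (𝒜 : ℕ → Submodule ℂ (MvPolynomial (Fin 2) ℂ ⧸ I))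
    (h𝒜 : ∀ d : ℕ, 𝒜 d = Submodule.span ℂ
      ((Ideal.Quotient.mk I) '' {f | f.IsWeightedHomogeneous ![n - 1, 1] d})) :
    (∀ d : ℕ, Module.finrank ℂ (𝒜 d) =
      (if d ≤ m * (n - 1) then 1 else 0) +
        ((Finset.Icc 1 (m - 1)).filter (fun i => i * (n - 1) = d)).card) ∧
    ¬ Unimodal (fun d => Module.finrank ℂ (𝒜 d)) ∧
    (¬ ∃ ℓ, IsSL 𝒜 ℓ) ∧
    (∃ ℓ ∈ (⨆ i : ℕ, 𝒜 (i + 1) : Submodule ℂ (MvPolynomial (Fin 2) ℂ ⧸ I)),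
      IsJordanTypeOf (LinearMap.mulLeft ℂ ℓ)
        (conjHilb (fun d => Module.finrank ℂ (𝒜 d))
          (Module.finrank ℂ (MvPolynomial (Fin 2) ℂ ⧸ I)))) := by
  obtain ⟨q, rfl⟩ := Nat.exists_eq_add_of_le' (show 1 ≤ n by omega)
  rw [Nat.add_sub_cancel] at *
  have hq : 2 ≤ q := by omega
  have hq1 : 1 ≤ q := by omega
  have hm1 : 1 ≤ m := by omega
  obtain rfl : I = relIdeal m (m * q) := hI
  have h𝒜' : ∀ d, 𝒜 d =
      Submodule.span ℂ (basisVec m (m * q) '' {i | basisDeg m (m * q) q i = d}) :=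
    fun d => (h𝒜 d).trans (graded_eq_span hm1 hq1 d)
  have hrank : ∀ d, Module.finrank ℂ (𝒜 d) = hilb m q d := fun d => by
    rw [h𝒜' d, finrank_graded hm1 hq1, hilb]
  have hH : (fun d => Module.finrank ℂ (𝒜 d)) = hilb m q := funext hrank
  refine ⟨hrank, ?_, not_isSL hm hq 𝒜 h𝒜' hrank, ?_⟩
  · rw [hH]
    exact not_unimodal_hilb hm hq
  · have hmem : ∀ (i : Fin 2) (d : ℕ), (![q, 1] : Fin 2 → ℕ) i = d + 1 →
        Ideal.Quotient.mk (relIdeal m (m * q)) (X i) ∈ ⨆ i : ℕ, 𝒜 (i + 1) := by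
      intro i d hd
      refine Submodule.mem_iSup_of_mem d ?_
      rw [h𝒜, ← hd]
      exact Submodule.subset_span ⟨X i, isWeightedHomogeneous_X ℂ _ i, rfl⟩
    refine ⟨Ideal.Quotient.mk _ (X 0) + Ideal.Quotient.mk _ (X 1),
      Submodule.add_mem _ (hmem 0 (q - 1) (by simp; omega)) (hmem 1 0 (by simp)), ?_⟩
    have hdim := finrank_quotient hm1 hq1
    rw [hH, conjHilb_hilb hm hq1 (by omega)]
    refine ⟨fun p hp => by simp at hp; omega, fun j => ?_⟩
    rw [finrank_range_mulLeft_add_pow (mk_mul_eq_zero _ _) hm1 (by nlinarith) (mk_pow_eq _ _)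
      (eq_top_of_pow_mem _) hdim]
    simp
end
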